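/- arXiv:2604.06329 — 3 statements merged into one kernel-verified Lean document; each statement's English description precedes it below -/
import Mathlib

section
/- In the restricted game RL^1(X,Y;v), the min-max value of player X is bounded above by the minimum of UB over the probability simplex: inf_{F_Y ∈ 𝔽^1(Y)} sup_{F_X ∈ 𝔽(X)} π_X(F_X,F_Y) ≤ min_{p ∈ Δ} UB(p). -/
open MeasureTheory Finset

noncomputable section

/-- Admissible strategies for a player with budget `B`: Borel probability measures on `ℝ^C`
supported (i.e. concentrated, with full measure) on the nonnegative orthant, whose expected
total allocation is at most `B`. -/
def Strat (C : ℕ) (B : ℝ) : Set (Measure (Fin C → ℝ)) :=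
  {μ | IsProbabilityMeasure μ ∧ μ {x | ∀ c, 0 ≤ x c} = 1 ∧
    ∫⁻ x, ENNReal.ofReal (∑ c, x c) ∂μ ≤ ENNReal.ofReal B}

/-- Expected payoff to player `X`: `E[Σ_c v_c · 1{x_c ≥ y_c}]`. -/
def payoff (C : ℕ) (v : Fin C → ℝ) (F G : Measure (Fin C → ℝ)) : ℝ :=
  ∫ x, (∫ y, (∑ c, if y c ≤ x c then v c else 0) ∂G) ∂F

/-- Allocations `t·e_c` with at most one positive coordinate. -/
def R1 (C : ℕ) : Set (Fin C → ℝ) :=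
  {y | ∃ c : Fin C, ∃ t : ℝ, 0 ≤ t ∧ y = fun c' => if c' = c then t else 0}

/-- Restricted strategies: admissible strategies concentrated on `R1`. -/
def Strat1 (C : ℕ) (B : ℝ) : Set (Measure (Fin C → ℝ)) :=
  {μ | μ ∈ Strat C B ∧ μ (R1 C) = 1}

/-- The upper-bound objective `UB(p)`. -/
def UB (C : ℕ) (v : Fin C → ℝ) (X Y : ℝ) (p : Fin C → ℝ) : ℝ :=
  if Y / X * (∑ c, v c * p c) ≤ ⨆ c, v c * p c then
    1 - Y / (2 * X) * (∑ c, v c * p c) ^ 2 / (⨆ c, v c * p c)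
  else
    1 - (∑ c, v c * p c) + X / (2 * Y) * (⨆ c, v c * p c)

/-- one-dimensional bid profile -/
def bidT (q a : ℝ) (u : ℝ) : ℝ := a * max 0 (q - u)

def bidV (C : ℕ) (q a : ℝ) (c : Fin C) (u : ℝ) : Fin C → ℝ :=
  fun c' => if c' = c then bidT q a u else 0

def unifM : Measure ℝ := (volume : Measure ℝ).restrict (Set.Icc 0 1)

instance unifM_prob : IsProbabilityMeasure unifM := by
  constructor
  simp [unifM]

def Gm (C : ℕ) (p : Fin C → ℝ) (q a : ℝ) : Measure (Fin C → ℝ) :=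
  ∑ c, ENNReal.ofReal (p c) • (unifM.map (bidV C q a c))

lemma bidT_meas (q a : ℝ) : Measurable (bidT q a) := by
  unfold bidT; fun_prop

lemma bidV_meas (C : ℕ) (q a : ℝ) (c : Fin C) : Measurable (bidV C q a c) := by
  refine measurable_pi_lambda _ fun c' => ?_
  unfold bidV
  by_cases h : c' = c
  · simpa [h] using bidT_meas q a
  · simp [h]

lemma sum_ofReal {C : ℕ} {p : Fin C → ℝ} (hp : p ∈ stdSimplex ℝ (Fin C)) :
    ∑ c, ENNReal.ofReal (p c) = 1 := by
  rw [← ENNReal.ofReal_sum_of_nonneg (fun i _ => hp.1 i), hp.2, ENNReal.ofReal_one]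

lemma Gm_prob {C : ℕ} {p : Fin C → ℝ} (hp : p ∈ stdSimplex ℝ (Fin C)) (q a : ℝ) :
    IsProbabilityMeasure (Gm C p q a) := by
  constructor
  have : ∀ c, (unifM.map (bidV C q a c)) Set.univ = 1 := fun c => by
    rw [Measure.map_apply (bidV_meas C q a c) MeasurableSet.univ]; simp
  simp [Gm, this, sum_ofReal hp]

lemma Gm_full {C : ℕ} {p : Fin C → ℝ} (hp : p ∈ stdSimplex ℝ (Fin C)) (q a : ℝ)
    (s : Set (Fin C → ℝ)) (hs : ∀ c u, bidV C q a c u ∈ s) : Gm C p q a s = 1 := by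
  haveI := Gm_prob hp q a
  refine le_antisymm prob_le_one ?_
  have : ∀ c, 1 ≤ (unifM.map (bidV C q a c)) s := fun c => by
    refine le_trans ?_ (Measure.le_map_apply (bidV_meas C q a c).aemeasurable s)
    have : (bidV C q a c) ⁻¹' s = Set.univ := by ext u; simp [hs c u]
    rw [this]; simp
  calc (1 : ENNReal) = ∑ c, ENNReal.ofReal (p c) * 1 := by simp [sum_ofReal hp]
    _ ≤ ∑ c, ENNReal.ofReal (p c) * (unifM.map (bidV C q a c)) s :=
        Finset.sum_le_sum fun c _ => by gcongr; exact this c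
    _ = Gm C p q a s := by simp [Gm]

lemma bidT_nonneg {q a : ℝ} (ha : 0 ≤ a) (u : ℝ) : 0 ≤ bidT q a u :=
  mul_nonneg ha (le_max_left _ _)

lemma bidT_mean {q a : ℝ} (ha : 0 ≤ a) (hq : 0 ≤ q) :
    ∫⁻ u, ENNReal.ofReal (bidT q a u) ∂unifM ≤ ENNReal.ofReal (a * q ^ 2 / 2) := by
  unfold unifM
  have hsub : Set.Icc (0:ℝ) 1 ⊆ Set.Ioc 0 q ∪ (Set.Ioi q ∪ {0}) := by
    intro u hu
    rcases le_or_gt u q with h | h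
    · rcases eq_or_lt_of_le hu.1 with h0 | h0
      · right; right; simp [h0]
      · left; exact ⟨h0, h⟩
    · right; left; exact h
  have h1 : ∫⁻ u in Set.Ioi q, ENNReal.ofReal (bidT q a u) = 0 := by
    rw [setLIntegral_congr_fun (g := fun _ => 0) measurableSet_Ioi]
    · simp
    · intro u hu
      have : max 0 (q - u) = 0 := max_eq_left (by have := Set.mem_Ioi.1 hu; linarith)
      simp [bidT, this]
  have h2 : ∫⁻ u in ({0} : Set ℝ), ENNReal.ofReal (bidT q a u) = 0 := by
    simp
  have h3 : ∫⁻ u in Set.Ioc 0 q, ENNReal.ofReal (bidT q a u) = ENNReal.ofReal (a * q ^ 2 / 2) := by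
    rw [← ofReal_integral_eq_lintegral_ofReal]
    · rw [← intervalIntegral.integral_of_le hq]
      congr 1
      have : ∫ u in (0:ℝ)..q, bidT q a u = ∫ u in (0:ℝ)..q, a * (q - u) := by
        apply intervalIntegral.integral_congr
        intro u hu
        rw [Set.uIcc_of_le hq] at hu
        simp only [bidT]
        rw [max_eq_right (by linarith [hu.2])]
      rw [this, intervalIntegral.integral_const_mul, intervalIntegral.integral_sub (by simp) (by simp)]
      simp
      ring
    · have : Continuous (bidT q a) := by unfold bidT; fun_prop
      exact (this.integrableOn_Icc).mono_set Set.Ioc_subset_Icc_self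
    · exact Filter.Eventually.of_forall fun u => bidT_nonneg ha u
  calc _ ≤ ∫⁻ u in Set.Ioc 0 q ∪ (Set.Ioi q ∪ {0}), ENNReal.ofReal (bidT q a u) :=
        lintegral_mono_set hsub
    _ ≤ _ := lintegral_union_le _ _ _
    _ ≤ ENNReal.ofReal (a * q ^ 2 / 2) + (0 + 0) := by
        refine add_le_add h3.le ((lintegral_union_le _ _ _).trans ?_)
        rw [h1, h2]
    _ = _ := by simp

lemma Gm_mem {C : ℕ} {p : Fin C → ℝ} (hp : p ∈ stdSimplex ℝ (Fin C)) {q a Y : ℝ}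
    (ha : 0 ≤ a) (hq : 0 ≤ q) (hY : a * q ^ 2 / 2 = Y) : Gm C p q a ∈ Strat1 C Y := by
  refine ⟨⟨Gm_prob hp q a, Gm_full hp q a _ ?_, ?_⟩, Gm_full hp q a _ ?_⟩
  · intro c u c'
    simp only [bidV]
    split_ifs
    · exact bidT_nonneg ha u
    · exact le_rfl
  · have hm : Measurable fun x : Fin C → ℝ => ENNReal.ofReal (∑ c, x c) := by fun_prop
    have : ∀ c, ∫⁻ x, ENNReal.ofReal (∑ c, x c) ∂(unifM.map (bidV C q a c)) ≤ ENNReal.ofReal Y := by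
      intro c
      rw [lintegral_map hm (bidV_meas C q a c)]
      simp only [bidV, Finset.sum_ite_eq', Finset.mem_univ, if_true]
      exact hY ▸ bidT_mean ha hq
    calc _ = ∑ c, ENNReal.ofReal (p c) * ∫⁻ x, ENNReal.ofReal (∑ c, x c) ∂(unifM.map (bidV C q a c)) := by
          simp [Gm, lintegral_finset_sum_measure, lintegral_smul_measure]
      _ ≤ ∑ c, ENNReal.ofReal (p c) * ENNReal.ofReal Y :=
          Finset.sum_le_sum fun c _ => by gcongr; exact this c
      _ = _ := by rw [← Finset.sum_mul, sum_ofReal hp, one_mul]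
  · intro c u
    exact ⟨c, bidT q a u, bidT_nonneg ha u, rfl⟩

lemma pay_meas (C : ℕ) (v : Fin C → ℝ) (x : Fin C → ℝ) :
    Measurable fun y : Fin C → ℝ => ∑ c, if y c ≤ x c then v c else 0 := by
  refine Finset.measurable_sum _ fun c _ => ?_
  exact Measurable.ite (measurableSet_le (by fun_prop) measurable_const) measurable_const
    measurable_const

lemma pay_nonneg {C : ℕ} {v : Fin C → ℝ} (hpos : ∀ c, 0 < v c) (x y : Fin C → ℝ) :
    0 ≤ ∑ c, if y c ≤ x c then v c else 0 :=
  Finset.sum_nonneg fun c _ => by split_ifs; exacts [(hpos c).le, le_rfl]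

lemma pay_le {C : ℕ} {v : Fin C → ℝ} (hpos : ∀ c, 0 < v c) (hsum : ∑ c, v c = 1)
    (x y : Fin C → ℝ) : (∑ c, if y c ≤ x c then v c else 0) ≤ 1 := by
  rw [← hsum]
  exact Finset.sum_le_sum fun c _ => by split_ifs; exacts [le_rfl, (hpos c).le]

lemma pay_int {C : ℕ} {v : Fin C → ℝ} (hpos : ∀ c, 0 < v c) (hsum : ∑ c, v c = 1)
    (x : Fin C → ℝ) (μ : Measure (Fin C → ℝ)) [IsFiniteMeasure μ] :
    Integrable (fun y : Fin C → ℝ => ∑ c, if y c ≤ x c then v c else 0) μ := by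
  refine Integrable.of_bound (pay_meas C v x).aestronglyMeasurable 1 ?_
  refine Filter.Eventually.of_forall fun y => ?_
  rw [Real.norm_of_nonneg (pay_nonneg hpos x y)]
  exact pay_le hpos hsum x y

lemma inner_c {C : ℕ} {v : Fin C → ℝ} (hpos : ∀ c, 0 < v c) (hsum : ∑ c, v c = 1)
    {q a : ℝ} (ha : 0 < a) (hq1 : q ≤ 1) (x : Fin C → ℝ) (hx : ∀ c, 0 ≤ x c) (c : Fin C) :
    ∫ y, (∑ c, if y c ≤ x c then v c else 0) ∂(unifM.map (bidV C q a c)) ≤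
      1 - v c + v c * (1 - q + x c / a) := by
  rw [integral_map (bidV_meas C q a c).aemeasurable (pay_meas C v x).aestronglyMeasurable]
  have hind : Integrable ((Set.Icc (q - x c / a) 1).indicator fun _ => (1:ℝ)) unifM :=
    (integrable_const (1:ℝ)).indicator measurableSet_Icc
  have hxa : 0 ≤ x c / a := div_nonneg (hx c) ha.le
  calc _ ≤ ∫ u, ((1 - v c) + v c * (Set.Icc (q - x c / a) 1).indicator (fun _ => (1:ℝ)) u) ∂unifM := by
        apply integral_mono_of_nonneg
        · exact Filter.Eventually.of_forall fun u => pay_nonneg hpos x _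
        · exact (integrable_const _).add (hind.const_mul _)
        · have : ∀ᵐ u ∂unifM, u ∈ Set.Icc (0:ℝ) 1 := ae_restrict_mem measurableSet_Icc
          filter_upwards [this] with u hu
          have hs : (∑ c' ∈ univ.erase c, v c') = 1 - v c := by
            rw [← hsum, ← Finset.add_sum_erase _ _ (Finset.mem_univ c)]; ring
          rw [← Finset.add_sum_erase _ _ (Finset.mem_univ c), add_comm, ← hs]
          refine add_le_add (Finset.sum_le_sum fun c' _ => ?_) ?_
          · split_ifs; exacts [le_rfl, (hpos c').le]
          · simp only [bidV, if_true]
            split_ifs with h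
            · rw [Set.indicator_of_mem, mul_one]
              refine ⟨?_, hu.2⟩
              have : a * (q - u) ≤ x c :=
                (mul_le_mul_of_nonneg_left (le_max_right _ _) ha.le).trans h
              have : q - u ≤ x c / a := by rw [le_div_iff₀ ha]; linarith
              linarith
            · exact mul_nonneg (hpos c).le (Set.indicator_nonneg (fun _ _ => zero_le_one) _)
    _ = 1 - v c + v c * unifM.real (Set.Icc (q - x c / a) 1) := by
        rw [integral_add (integrable_const _) (hind.const_mul _), integral_const_mul,
          show (∫ u, (Set.Icc (q - x c / a) 1).indicator (fun _ => (1:ℝ)) u ∂unifM) =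
            unifM.real (Set.Icc (q - x c / a) 1) from integral_indicator_one measurableSet_Icc]
        simp
    _ ≤ _ := by
        gcongr
        · exact (hpos c).le
        · calc unifM.real (Set.Icc (q - x c / a) 1) ≤ volume.real (Set.Icc (q - x c / a) 1) := by
                refine ENNReal.toReal_mono (by simp) ?_
                exact Measure.restrict_apply_le _ _
            _ = _ := by
                rw [Real.volume_real_Icc_of_le (by linarith)]; ring

lemma inner_le {C : ℕ} {v : Fin C → ℝ} (hpos : ∀ c, 0 < v c) (hsum : ∑ c, v c = 1)
    {p : Fin C → ℝ} (hp : p ∈ stdSimplex ℝ (Fin C))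
    {q a : ℝ} (ha : 0 < a) (hq1 : q ≤ 1) (x : Fin C → ℝ) (hx : ∀ c, 0 ≤ x c) :
    ∫ y, (∑ c, if y c ≤ x c then v c else 0) ∂(Gm C p q a) ≤
      1 - q * (∑ c, v c * p c) + (⨆ c, v c * p c) / a * ∑ c, x c := by
  have hprob : ∀ c, IsProbabilityMeasure (unifM.map (bidV C q a c)) := fun c =>
    Measure.isProbabilityMeasure_map (bidV_meas C q a c).aemeasurable
  unfold Gm
  rw [integral_finset_sum_measure]
  swap
  · intro c _
    exact (pay_int hpos hsum x _).smul_measure ENNReal.ofReal_ne_top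
  calc _ ≤ ∑ c, p c * (1 - v c + v c * (1 - q + x c / a)) := by
        refine Finset.sum_le_sum fun c _ => ?_
        rw [integral_smul_measure, ENNReal.toReal_ofReal (hp.1 c), smul_eq_mul]
        exact mul_le_mul_of_nonneg_left (inner_c hpos hsum ha hq1 x hx c) (hp.1 c)
    _ = 1 - q * (∑ c, v c * p c) + ∑ c, (v c * p c) / a * x c := by
        have h1 := hp.2
        rw [show (1:ℝ) - q * (∑ c, v c * p c) = (∑ c, p c) - q * (∑ c, v c * p c) by rw [h1],
          Finset.mul_sum, ← Finset.sum_sub_distrib, ← Finset.sum_add_distrib]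
        refine Finset.sum_congr rfl fun c _ => ?_
        ring
    _ ≤ _ := by
        refine add_le_add le_rfl ?_
        rw [Finset.mul_sum]
        refine (Finset.sum_le_sum fun c _ => ?_)
        refine mul_le_mul_of_nonneg_right (div_le_div_of_nonneg_right ?_ ha.le) (hx c)
        exact le_ciSup (f := fun c => v c * p c) (Set.finite_range _).bddAbove c

lemma payoff_le {C : ℕ} {v : Fin C → ℝ} (hpos : ∀ c, 0 < v c) (hsum : ∑ c, v c = 1)
    {p : Fin C → ℝ} (hp : p ∈ stdSimplex ℝ (Fin C))
    {q a X : ℝ} (ha : 0 < a) (hq1 : q ≤ 1) (hX : 0 < X) (hm : 0 ≤ ⨆ c, v c * p c)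
    (F : Measure (Fin C → ℝ)) (hF : F ∈ Strat C X) :
    payoff C v F (Gm C p q a) ≤
      1 - q * (∑ c, v c * p c) + (⨆ c, v c * p c) / a * X := by
  obtain ⟨hF1, hF2, hF3⟩ := hF
  have hms : MeasurableSet {x : Fin C → ℝ | ∀ c, 0 ≤ x c} := by
    rw [Set.setOf_forall]
    exact MeasurableSet.iInter fun c => measurableSet_le measurable_const (measurable_pi_apply c)
  have hae : ∀ᵐ x ∂F, ∀ c, 0 ≤ x c := (mem_ae_iff_prob_eq_one hms).2 hF2
  have hae' : 0 ≤ᵐ[F] fun x => ∑ c, x c := by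
    filter_upwards [hae] with x hx
    exact Finset.sum_nonneg fun c _ => hx c
  have hmeas : Measurable fun x : Fin C → ℝ => ∑ c, x c := by fun_prop
  have hint : Integrable (fun x : Fin C → ℝ => ∑ c, x c) F :=
    ⟨hmeas.aestronglyMeasurable, by
      rw [hasFiniteIntegral_iff_ofReal hae']
      exact hF3.trans_lt ENNReal.ofReal_lt_top⟩
  have hmean : ∫ x, ∑ c, x c ∂F ≤ X := by
    rw [integral_eq_lintegral_of_nonneg_ae hae' hmeas.aestronglyMeasurable]
    exact ENNReal.toReal_le_of_le_ofReal hX.le hF3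
  unfold payoff
  calc _ ≤ ∫ x, (1 - q * (∑ c, v c * p c) + (⨆ c, v c * p c) / a * ∑ c, x c) ∂F := by
        apply integral_mono_of_nonneg
        · exact Filter.Eventually.of_forall fun x => integral_nonneg fun y => pay_nonneg hpos x y
        · exact (integrable_const _).add (hint.const_mul _)
        · filter_upwards [hae] with x hx
          exact inner_le hpos hsum hp ha hq1 x hx
    _ = 1 - q * (∑ c, v c * p c) + (⨆ c, v c * p c) / a * ∫ x, ∑ c, x c ∂F := by
        rw [integral_add (integrable_const _) (hint.const_mul _), integral_const_mul]
        simp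
    _ ≤ _ := by gcongr

lemma minmax_le {C : ℕ} {v : Fin C → ℝ} (hpos : ∀ c, 0 < v c) (hsum : ∑ c, v c = 1)
    {p : Fin C → ℝ} (hp : p ∈ stdSimplex ℝ (Fin C))
    {q X Y : ℝ} (hq : 0 < q) (hq1 : q ≤ 1) (hX : 0 < X) (hY : 0 < Y)
    (hm : 0 ≤ ⨆ c, v c * p c) :
    (⨅ G : Strat1 C Y, ⨆ F : Strat C X, payoff C v F.1 G.1) ≤
      1 - q * (∑ c, v c * p c) + (⨆ c, v c * p c) / (2 * Y / q ^ 2) * X := by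
  have ha : 0 < 2 * Y / q ^ 2 := by positivity
  have hG : Gm C p q (2 * Y / q ^ 2) ∈ Strat1 C Y :=
    Gm_mem hp ha.le hq.le (by field_simp)
  have hbdd : BddBelow (Set.range fun G : Strat1 C Y => ⨆ F : Strat C X, payoff C v F.1 G.1) := by
    refine ⟨0, ?_⟩
    rintro _ ⟨G, rfl⟩
    exact Real.iSup_nonneg fun F => integral_nonneg fun x => integral_nonneg fun y =>
      pay_nonneg hpos x y
  refine (ciInf_le hbdd ⟨_, hG⟩).trans ?_
  haveI : Nonempty (Strat C X) := by
    refine ⟨⟨Measure.dirac 0, inferInstance, ?_, ?_⟩⟩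
    · exact le_antisymm prob_le_one
        (le_trans (by simp) (Measure.le_dirac_apply))
    · rw [lintegral_dirac' _ (by fun_prop)]; simp
  exact ciSup_le fun F => payoff_le hpos hsum hp ha hq1 hX hm F.1 F.2

/-- Lemma 2: in the restricted game `RL^1(X,Y;v)`, the min-max value of
player X is at most `min_{p ∈ Δ} UB(p)`. -/
theorem RL1_minmax_upper_bound_simplex (C : ℕ) (hC : 0 < C) (v : Fin C → ℝ)
    (hpos : ∀ c, 0 < v c) (hsum : ∑ c, v c = 1)
    (X Y : ℝ) (hX : 0 < X) (hY : 0 < Y) :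
    (⨅ G : Strat1 C Y, ⨆ F : Strat C X, payoff C v F.1 G.1) ≤
      sInf (UB C v X Y '' stdSimplex ℝ (Fin C)) := by
  haveI : Nonempty (Fin C) := ⟨⟨0, hC⟩⟩
  refine le_csInf ?_ ?_
  · exact Set.Nonempty.image _ ⟨_, single_mem_stdSimplex ℝ (⟨0, hC⟩ : Fin C)⟩
  rintro _ ⟨p, hp, rfl⟩
  have hle : ∀ c, v c * p c ≤ ⨆ c, v c * p c := fun c =>
    le_ciSup (f := fun c => v c * p c) (Set.finite_range _).bddAbove c
  have hex : ∃ c, 0 < p c := by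
    by_contra! h
    have : ∑ c, p c ≤ 0 := Finset.sum_nonpos fun c _ => h c
    linarith [hp.2]
  obtain ⟨c₀, hc₀⟩ := hex
  have h0 : 0 < v c₀ * p c₀ := mul_pos (hpos c₀) hc₀
  have hm : 0 < ⨆ c, v c * p c := h0.trans_le (hle c₀)
  have hs : 0 < ∑ c, v c * p c :=
    h0.trans_le (Finset.single_le_sum (f := fun c => v c * p c)
      (fun c _ => mul_nonneg (hpos c).le (hp.1 c)) (Finset.mem_univ c₀))
  have key := fun q hq hq1 => minmax_le (q := q) hpos hsum hp hq hq1 hX hY hm.le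
  unfold UB
  generalize (⨆ c, v c * p c) = m at *
  generalize (∑ c, v c * p c) = s at *
  split_ifs with h
  · refine (key (Y / X * s / m) (by positivity) ((div_le_one hm).2 h)).trans (le_of_eq ?_)
    field_simp
    ring
  · refine (key 1 one_pos le_rfl).trans (le_of_eq ?_)
    field_simp
end
end

section
/- For any k ∈ {1,…,C} and any subset S ⊆ {1,…,C} with |S| = k, the top-k contest set is weakly preferred: UB(q([k])) ≤ UB(q(S)). -/
open Finset

noncomputable section

/-- The equalizing point `q(S)` of a subset `S` of contests. -/
def qvec (C : ℕ) (v : Fin C → ℝ) (S : Finset (Fin C)) : Fin C → ℝ :=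
  fun c => if c ∈ S then
    (∏ j ∈ S.erase c, v j) / (∑ l ∈ S, ∏ j ∈ S.erase l, v j)
  else 0

/-- The top `k` contests in value, `[k] = {1,…,k}`. -/
def topk (C k : ℕ) : Finset (Fin C) := Finset.univ.filter (fun c => (c : ℕ) < k)

lemma qv_mul (C : ℕ) (v : Fin C → ℝ) (hpos : ∀ c, 0 < v c) (S : Finset (Fin C)) (c : Fin C) :
    v c * qvec C v S c = if c ∈ S then (∑ l ∈ S, (v l)⁻¹)⁻¹ else 0 := by
  unfold qvec
  split_ifs with h
  · have hP : (∏ j ∈ S, v j) ≠ 0 := Finset.prod_ne_zero_iff.mpr fun j _ => (hpos j).ne'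
    have he : ∀ l ∈ S, ∏ j ∈ S.erase l, v j = (∏ j ∈ S, v j) * (v l)⁻¹ := by
      intro l hl
      rw [← Finset.mul_prod_erase S v hl]
      have := (hpos l).ne'
      field_simp
    rw [Finset.sum_congr rfl he, he c h, ← Finset.mul_sum]
    have hc := (hpos c).ne'
    rw [mul_div_mul_left _ _ hP, div_eq_mul_inv, ← mul_assoc, mul_inv_cancel₀ hc, one_mul]
  · simp

lemma qv_sum (C : ℕ) (v : Fin C → ℝ) (hpos : ∀ c, 0 < v c) (S : Finset (Fin C)) :
    ∑ c, v c * qvec C v S c = S.card * (∑ l ∈ S, (v l)⁻¹)⁻¹ := by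
  simp [qv_mul C v hpos S]

lemma qv_sup (C : ℕ) (v : Fin C → ℝ) (hpos : ∀ c, 0 < v c) (S : Finset (Fin C))
    (hS : S.Nonempty) :
    ⨆ c, v c * qvec C v S c = (∑ l ∈ S, (v l)⁻¹)⁻¹ := by
  obtain ⟨c, hc⟩ := hS
  have : Nonempty (Fin C) := ⟨c⟩
  have h0 : 0 ≤ (∑ l ∈ S, (v l)⁻¹)⁻¹ :=
    inv_nonneg.mpr (Finset.sum_nonneg fun l _ => (inv_pos.mpr (hpos l)).le)
  apply le_antisymm
  · apply ciSup_le
    intro d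
    rw [qv_mul C v hpos S]
    split_ifs
    · exact le_rfl
    · exact h0
  · refine le_trans ?_ (le_ciSup (Set.finite_range _).bddAbove c)
    rw [qv_mul C v hpos S, if_pos hc]

lemma topk_card (C k : ℕ) (hk2 : k ≤ C) : (topk C k).card = k := by
  unfold topk
  rw [Fin.card_filter_val_lt]
  exact min_eq_right hk2

lemma topk_sum (C : ℕ) (v : Fin C → ℝ)
    (hpos : ∀ c, 0 < v c) (hdec : StrictAnti v)
    (k : ℕ) (hk1 : 1 ≤ k) (hk2 : k ≤ C) (S : Finset (Fin C)) (hcard : S.card = k) :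
    ∑ l ∈ topk C k, (v l)⁻¹ ≤ ∑ l ∈ S, (v l)⁻¹ := by
  have hct := topk_card C k hk2
  have hcs : (topk C k \ S).card = (S \ topk C k).card :=
    Finset.card_sdiff_comm (by rw [hct, hcard])
  rw [← Finset.sum_inter_add_sum_sdiff (topk C k) S, ← Finset.sum_inter_add_sum_sdiff S (topk C k),
    Finset.inter_comm S]
  apply add_le_add_right
  let b : Fin C := ⟨k - 1, by omega⟩
  calc _ ≤ (topk C k \ S).card • (v b)⁻¹ := by
        apply Finset.sum_le_card_nsmul
        intro x hx
        simp only [topk, Finset.mem_sdiff, Finset.mem_filter, Finset.mem_univ, true_and] at hx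
        refine inv_anti₀ (hpos b) (hdec.antitone ?_)
        rw [Fin.le_def]
        simp only [b]
        omega
    _ = (S \ topk C k).card • (v b)⁻¹ := by rw [hcs]
    _ ≤ _ := by
        apply Finset.card_nsmul_le_sum
        intro x hx
        simp only [topk, Finset.mem_sdiff, Finset.mem_filter, Finset.mem_univ, true_and] at hx
        refine inv_anti₀ (hpos x) (hdec.antitone ?_)
        rw [Fin.le_def]
        simp only [b]
        omega

lemma UB_eq (C : ℕ) (v : Fin C → ℝ) (hpos : ∀ c, 0 < v c) (X Y : ℝ)
    (S : Finset (Fin C)) (hS : S.Nonempty) :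
    UB C v X Y (qvec C v S) = if Y / X * S.card ≤ 1 then
      1 - Y / (2 * X) * S.card ^ 2 * (∑ l ∈ S, (v l)⁻¹)⁻¹
      else 1 - (S.card - X / (2 * Y)) * (∑ l ∈ S, (v l)⁻¹)⁻¹ := by
  unfold UB
  rw [qv_sum C v hpos, qv_sup C v hpos S hS]
  have hm : 0 < (∑ l ∈ S, (v l)⁻¹)⁻¹ :=
    inv_pos.mpr (Finset.sum_pos (fun l _ => inv_pos.mpr (hpos l)) hS)
  generalize (∑ l ∈ S, (v l)⁻¹)⁻¹ = m at hm
  have hiff : Y / X * (S.card * m) ≤ m ↔ Y / X * S.card ≤ 1 := by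
    rw [← mul_assoc]
    exact mul_le_iff_le_one_left hm
  rw [if_congr hiff rfl rfl]
  split_ifs
  · have := hm.ne'
    rw [mul_pow, sq m, mul_div_assoc, ← mul_assoc (_ ^ 2 : ℝ), mul_div_cancel_right₀ _ this]
    ring
  · ring

/-- Lemma 8: among all subsets of size `k`, the top-`k` contest set is
weakly preferred: `UB(q([k])) ≤ UB(q(S))`. -/
theorem UB_topk_le (C : ℕ) (v : Fin C → ℝ)
    (hpos : ∀ c, 0 < v c) (hdec : StrictAnti v) (hsum : ∑ c, v c = 1)
    (X Y : ℝ) (hX : 0 < X) (hY : 0 < Y)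
    (k : ℕ) (hk1 : 1 ≤ k) (hk2 : k ≤ C) (S : Finset (Fin C)) (hcard : S.card = k) :
    UB C v X Y (qvec C v (topk C k)) ≤ UB C v X Y (qvec C v S) := by
  have hct := topk_card C k hk2
  have hT : (topk C k).Nonempty := Finset.card_pos.mp (by omega)
  have hS : S.Nonempty := Finset.card_pos.mp (by omega)
  have hle := inv_anti₀ (Finset.sum_pos (fun l _ => inv_pos.mpr (hpos l)) hT)
    (topk_sum C v hpos hdec k hk1 hk2 S hcard)
  rw [UB_eq C v hpos X Y _ hT, UB_eq C v hpos X Y _ hS, hct, hcard]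
  split_ifs with h
  · apply sub_le_sub_left
    exact mul_le_mul_of_nonneg_left hle (by positivity)
  · apply sub_le_sub_left
    refine mul_le_mul_of_nonneg_left hle ?_
    push Not at h
    have h1 : X < Y * k := by
      rw [div_mul_eq_mul_div, lt_div_iff₀ hX] at h
      linarith
    rw [sub_nonneg, div_le_iff₀ (by positivity)]
    nlinarith
end
end

section
/- In the generalized restricted game RL^K(X,Y;v), for every probability distribution p = (p_S) over the size-K subsets S of {1,…,C} and every family β = (β_{S,c}) with β_{S,c} > 0 for c ∈ S and Σ_{c∈S} β_{S,c} = 1 for each size-K subset S, the min-max value of player X satisfies inf_{F_Y ∈ 𝔽^K(Y)} sup_{F_X ∈ 𝔽(X)} π_X(F_X,F_Y) ≤ 1 − T₁(p)²/(4·T₂(p,β)) if T₁(p) ≤ 2·T₂(p,β), and ≤ 1 − T₁(p) + T₂(p,β) if T₁(p) > 2·T₂(p,β), where T₁(p) := Σ_c v_c·Σ_{S : c∈S} p_S and T₂(p,β) := (X/(2Y))·max_c { v_c·Σ_{S : c∈S} p_S/β_{S,c} }. -/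
open MeasureTheory Finset

noncomputable section

/-- Nonnegative allocations with at most `K` positive coordinates. -/
def RK (C K : ℕ) : Set (Fin C → ℝ) :=
  {y | (∀ c, 0 ≤ y c) ∧ {c : Fin C | 0 < y c}.ncard ≤ K}

/-- Restricted strategies: admissible strategies concentrated on `R^K`. -/
def StratK (C K : ℕ) (B : ℝ) : Set (Measure (Fin C → ℝ)) :=
  {μ | μ ∈ Strat C B ∧ μ (RK C K) = 1}

/-- Uniform ray along `k` with probability `a`, zero otherwise. -/
def nuRay (C : ℕ) (a : ℝ) (k : Fin C → ℝ) : Measure (Fin C → ℝ) :=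
  ENNReal.ofReal a • Measure.map (fun u : ℝ => fun c => u * k c)
    (volume.restrict (Set.Icc (0:ℝ) 1)) + ENNReal.ofReal (1 - a) • Measure.dirac 0

lemma ray_meas (C : ℕ) (k : Fin C → ℝ) : Measurable (fun u : ℝ => fun c => u * k c) := by
  fun_prop

lemma ray_unit : IsProbabilityMeasure (volume.restrict (Set.Icc (0:ℝ) 1)) := by
  constructor
  simp

lemma ofReal_two (a : ℝ) (h0 : 0 ≤ a) (h1 : a ≤ 1) :
    ENNReal.ofReal a + ENNReal.ofReal (1 - a) = 1 := by
  rw [← ENNReal.ofReal_add h0 (by linarith)]; simp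

lemma nuRay_prob (C : ℕ) (a : ℝ) (k : Fin C → ℝ) (h0 : 0 ≤ a) (h1 : a ≤ 1) :
    IsProbabilityMeasure (nuRay C a k) := by
  have := ray_unit
  have := Measure.isProbabilityMeasure_map (μ := volume.restrict (Set.Icc (0:ℝ) 1))
    (ray_meas C k).aemeasurable
  constructor
  simp only [nuRay, Measure.add_apply, Measure.smul_apply, measure_univ, smul_eq_mul, mul_one]
  exact ofReal_two a h0 h1

lemma nuRay_full (C : ℕ) (a : ℝ) (k : Fin C → ℝ) (h0 : 0 ≤ a) (h1 : a ≤ 1)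
    (s : Set (Fin C → ℝ)) (hs0 : (0 : Fin C → ℝ) ∈ s)
    (hs : ∀ u : ℝ, 0 ≤ u → (fun c => u * k c) ∈ s) : nuRay C a k s = 1 := by
  have := nuRay_prob C a k h0 h1
  apply le_antisymm prob_le_one
  simp only [nuRay, Measure.add_apply, Measure.smul_apply, smul_eq_mul,
    Measure.dirac_apply_of_mem hs0, mul_one]
  rw [← ofReal_two a h0 h1]
  gcongr
  have h2 : 1 ≤ Measure.map (fun u : ℝ => fun c => u * k c)
      (volume.restrict (Set.Icc (0:ℝ) 1)) s := by
    refine le_trans ?_ (Measure.le_map_apply (ray_meas C k).aemeasurable s)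
    have h3 : Set.Icc (0:ℝ) 1 ⊆ (fun u : ℝ => fun c => u * k c) ⁻¹' s := fun u hu => hs u hu.1
    refine le_trans ?_ (measure_mono h3)
    simp
  calc ENNReal.ofReal a = ENNReal.ofReal a * 1 := by simp
    _ ≤ _ := by gcongr

lemma nuRay_budget (C : ℕ) (a : ℝ) (k : Fin C → ℝ) (h0 : 0 ≤ a) (hk : ∀ c, 0 ≤ k c) :
    ∫⁻ y, ENNReal.ofReal (∑ c, y c) ∂(nuRay C a k) = ENNReal.ofReal (a * (∑ c, k c) / 2) := by
  have hm : Measurable (fun y : Fin C → ℝ => ENNReal.ofReal (∑ c, y c)) := by fun_prop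
  rw [nuRay, lintegral_add_measure, lintegral_smul_measure, lintegral_smul_measure,
    lintegral_map hm (ray_meas C k), lintegral_dirac' _ hm]
  simp only [Pi.zero_apply, Finset.sum_const_zero, ENNReal.ofReal_zero, smul_zero, add_zero]
  simp only [← Finset.mul_sum]
  have hK : 0 ≤ ∑ c, k c := Finset.sum_nonneg fun c _ => hk c
  rw [← ofReal_integral_eq_lintegral_ofReal]
  · rw [smul_eq_mul, ← ENNReal.ofReal_mul h0, integral_mul_const, integral_Icc_eq_integral_Ioc,
      ← intervalIntegral.integral_of_le zero_le_one, integral_id]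
    congr 1; ring
  · exact (Continuous.continuousOn (by fun_prop)).integrableOn_Icc
  · filter_upwards [ae_restrict_mem measurableSet_Icc] with u hu
    exact mul_nonneg hu.1 hK

lemma meas_le (C : ℕ) (c : Fin C) (t : ℝ) : MeasurableSet {y : Fin C → ℝ | y c ≤ t} :=
  measurableSet_le (measurable_pi_apply c) measurable_const

lemma nuRay_cdf (C : ℕ) (a : ℝ) (k : Fin C → ℝ) (h0 : 0 ≤ a) (h1 : a ≤ 1) (c : Fin C)
    (hk : 0 < k c) (t : ℝ) (ht : 0 ≤ t) :
    (nuRay C a k).real {y | y c ≤ t} ≤ a * (t / k c) + (1 - a) := by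
  have hd : 0 ≤ t / k c := by positivity
  apply ENNReal.toReal_le_of_le_ofReal (by nlinarith [mul_nonneg h0 hd])
  rw [ENNReal.ofReal_add (by positivity) (by linarith), ENNReal.ofReal_mul h0]
  simp only [nuRay, Measure.add_apply, Measure.smul_apply, smul_eq_mul]
  gcongr
  · rw [Measure.map_apply (ray_meas C k) (meas_le C c t), Measure.restrict_apply
      ((ray_meas C k) (meas_le C c t))]
    have : (fun u : ℝ => fun c => u * k c) ⁻¹' {y | y c ≤ t} ∩ Set.Icc 0 1 ⊆
        Set.Icc 0 (t / k c) := by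
      rintro u ⟨hu, hu2⟩
      refine ⟨hu2.1, ?_⟩
      rw [le_div_iff₀ hk]
      exact hu
    refine (measure_mono this).trans ?_
    simp
  · calc _ ≤ ENNReal.ofReal (1 - a) * 1 := by gcongr; exact prob_le_one
      _ = _ := by simp

/-- Finite mixture. -/
def mixM {ι : Type*} (C : ℕ) (A : Finset ι) (p : ι → ℝ) (ν : ι → Measure (Fin C → ℝ)) :
    Measure (Fin C → ℝ) := ∑ S ∈ A, ENNReal.ofReal (p S) • ν S

lemma mixM_apply {ι : Type*} (C : ℕ) (A : Finset ι) (p : ι → ℝ) (ν : ι → Measure (Fin C → ℝ))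
    (s : Set (Fin C → ℝ)) : mixM C A p ν s = ∑ S ∈ A, ENNReal.ofReal (p S) * ν S s := by
  simp [mixM, Measure.finsetSum_apply]

lemma mixM_full {ι : Type*} (C : ℕ) (A : Finset ι) (p : ι → ℝ) (ν : ι → Measure (Fin C → ℝ))
    (hp : ∀ S, 0 ≤ p S) (hs : ∑ S ∈ A, p S = 1)
    (s : Set (Fin C → ℝ)) (h : ∀ S ∈ A, ν S s = 1) : mixM C A p ν s = 1 := by
  rw [mixM_apply, Finset.sum_congr rfl (fun S hS => by rw [h S hS, mul_one]),
    ← ENNReal.ofReal_sum_of_nonneg (fun S _ => hp S), hs, ENNReal.ofReal_one]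

lemma mixM_real {ι : Type*} (C : ℕ) (A : Finset ι) (p : ι → ℝ) (ν : ι → Measure (Fin C → ℝ))
    (hp : ∀ S, 0 ≤ p S) (hν : ∀ S ∈ A, IsProbabilityMeasure (ν S)) 
    (s : Set (Fin C → ℝ)) : (mixM C A p ν).real s = ∑ S ∈ A, p S * (ν S).real s := by
  rw [Measure.real, mixM_apply, ENNReal.toReal_sum]
  · refine Finset.sum_congr rfl fun S _ => ?_
    rw [ENNReal.toReal_mul, ENNReal.toReal_ofReal (hp S), Measure.real]
  · intro S hS
    have := hν S hS
    exact ENNReal.mul_ne_top ENNReal.ofReal_ne_top (measure_ne_top _ _)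

lemma inner_eq (C : ℕ) (v : Fin C → ℝ) (G : Measure (Fin C → ℝ)) [IsProbabilityMeasure G]
    (x : Fin C → ℝ) : (∫ y, (∑ c, if y c ≤ x c then v c else 0) ∂G) =
      ∑ c, v c * G.real {y | y c ≤ x c} := by
  have e : ∀ c, (fun y : Fin C → ℝ => if y c ≤ x c then v c else 0) =
      Set.indicator {y | y c ≤ x c} (fun _ => v c) := by
    intro c; ext y; simp [Set.indicator_apply]
  rw [integral_finsetSum]
  · refine Finset.sum_congr rfl fun c _ => ?_
    rw [e c, integral_indicator_const _ (meas_le C c (x c)), smul_eq_mul, mul_comm]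
  · intro c _
    rw [e c]
    exact (integrable_const _).indicator (meas_le C c (x c))

lemma payoff_nonneg (C : ℕ) (v : Fin C → ℝ) (hv : ∀ c, 0 < v c) (F G : Measure (Fin C → ℝ)) :
    0 ≤ payoff C v F G := by
  refine integral_nonneg fun x => integral_nonneg fun y => Finset.sum_nonneg fun c _ => ?_
  have := (hv c).le
  split_ifs <;> simp [this]

lemma payoff_le_s17 (C : ℕ) (v : Fin C → ℝ) (hv : ∀ c, 0 < v c) (F G : Measure (Fin C → ℝ)) (X : ℝ)
    (hX : 0 < X) (hF : F ∈ Strat C X) (A M : ℝ) (hM : 0 ≤ M)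
    (h : ∀ x : Fin C → ℝ, (∀ c, 0 ≤ x c) →
      (∫ y, (∑ c, if y c ≤ x c then v c else 0) ∂G) ≤ A + M * ∑ c, x c) :
    payoff C v F G ≤ A + M * X := by
  obtain ⟨hF1, hF2, hF3⟩ := hF
  have hms : MeasurableSet {x : Fin C → ℝ | ∀ c, 0 ≤ x c} := by
    simp only [Set.ofPred_forall]
    exact MeasurableSet.iInter fun c => measurableSet_le measurable_const (measurable_pi_apply c)
  have hae : ∀ᵐ x ∂F, ∀ c, 0 ≤ x c := by
    rw [ae_iff]
    exact (prob_compl_eq_zero_iff hms).2 hF2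
  have hm : Measurable (fun x : Fin C → ℝ => ∑ c, x c) := by fun_prop
  have hs0 : 0 ≤ᵐ[F] (fun x : Fin C → ℝ => ∑ c, x c) := by
    filter_upwards [hae] with x hx
    exact Finset.sum_nonneg fun c _ => hx c
  have hint : Integrable (fun x : Fin C → ℝ => ∑ c, x c) F := by
    refine ⟨hm.aestronglyMeasurable, ?_⟩
    rw [hasFiniteIntegral_iff_ofReal hs0]
    exact hF3.trans_lt ENNReal.ofReal_lt_top
  have hi : ∫ x, ∑ c, x c ∂F ≤ X := by
    rw [integral_eq_lintegral_of_nonneg_ae hs0 hm.aestronglyMeasurable]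
    exact ENNReal.toReal_le_of_le_ofReal hX.le hF3
  calc payoff C v F G ≤ ∫ x, (A + M * ∑ c, x c) ∂F := by
        refine integral_mono_of_nonneg ?_ ?_ ?_
        · refine Filter.Eventually.of_forall fun x => integral_nonneg fun y =>
            Finset.sum_nonneg fun c _ => ?_
          have := (hv c).le
          split_ifs <;> simp [this]
        · exact (integrable_const _).add (hint.const_mul M)
        · filter_upwards [hae] with x hx using h x hx
    _ = A + M * ∫ x, ∑ c, x c ∂F := by
        rw [integral_add (integrable_const _) (hint.const_mul M), integral_const_mul]; simp
    _ ≤ _ := by gcongr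

/-- The bound for a fixed participation probability `a`. -/
lemma bound_a (C : ℕ) (v : Fin C → ℝ)
    (hpos : ∀ c, 0 < v c) (hsum : ∑ c, v c = 1)
    (X Y : ℝ) (hX : 0 < X) (hY : 0 < Y) (K : ℕ)
    (p : Finset (Fin C) → ℝ)
    (hp0 : ∀ S, 0 ≤ p S)
    (hpsum : ∑ S ∈ Finset.univ.filter (fun S : Finset (Fin C) => S.card = K), p S = 1)
    (β : Finset (Fin C) → Fin C → ℝ)
    (hβpos : ∀ S : Finset (Fin C), S.card = K → ∀ c ∈ S, 0 < β S c)
    (hβsum : ∀ S : Finset (Fin C), S.card = K → ∑ c ∈ S, β S c = 1)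
    (a Q : ℝ) (ha : 0 < a) (ha1 : a ≤ 1) (hQ0 : 0 ≤ Q)
    (hQ : ∀ c, v c *
        ∑ S ∈ Finset.univ.filter (fun S : Finset (Fin C) => S.card = K ∧ c ∈ S), p S / β S c ≤ Q) :
    (⨅ G : StratK C K Y, ⨆ F : Strat C X, payoff C v F.1 G.1) ≤
      1 - a * (∑ c, v c *
        ∑ S ∈ Finset.univ.filter (fun S : Finset (Fin C) => S.card = K ∧ c ∈ S), p S)
        + a ^ 2 * (X / (2 * Y) * Q) := by
  set A := Finset.univ.filter (fun S : Finset (Fin C) => S.card = K) with hA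
  let k : Finset (Fin C) → Fin C → ℝ := fun S c => if c ∈ S then 2 * Y * β S c / a else 0
  let ν : Finset (Fin C) → Measure (Fin C → ℝ) := fun S => nuRay C a (k S)
  have hcard : ∀ S ∈ A, S.card = K := fun S hS => (Finset.mem_filter.1 hS).2
  have hk0 : ∀ S ∈ A, ∀ c, 0 ≤ k S c := by
    intro S hS c
    simp only [k]
    split_ifs with hc
    · have := hβpos S (hcard S hS) c hc
      positivity
    · rfl
  have hksum : ∀ S ∈ A, ∑ c, k S c = 2 * Y / a := by
    intro S hS
    simp only [k]
    rw [Finset.sum_ite_mem, Finset.univ_inter, ← Finset.sum_div, ← Finset.mul_sum,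
      hβsum S (hcard S hS), mul_one]
  have hνp : ∀ S ∈ A, IsProbabilityMeasure (ν S) := fun S _ => nuRay_prob C a _ ha.le ha1
  have hGp : IsProbabilityMeasure (mixM C A p ν) :=
    ⟨mixM_full C A p ν hp0 hpsum _ (fun S hS => by have := hνp S hS; exact measure_univ)⟩
  have hG : mixM C A p ν ∈ StratK C K Y := by
    refine ⟨⟨hGp, ?_, ?_⟩, ?_⟩
    · refine mixM_full C A p ν hp0 hpsum _ fun S hS => nuRay_full C a _ ha.le ha1 _ ?_ ?_
      · intro c; simp
      · intro u hu c; exact mul_nonneg hu (hk0 S hS c)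
    · rw [mixM, lintegral_finsetSum_measure]
      have : ∀ S ∈ A, ∫⁻ y, ENNReal.ofReal (∑ c, y c) ∂(ENNReal.ofReal (p S) • ν S) =
          ENNReal.ofReal (p S) * ENNReal.ofReal Y := by
        intro S hS
        rw [lintegral_smul_measure, smul_eq_mul, nuRay_budget C a _ ha.le (hk0 S hS), hksum S hS]
        congr 2
        field_simp
      rw [Finset.sum_congr rfl this, ← Finset.sum_mul,
        ← ENNReal.ofReal_sum_of_nonneg (fun S _ => hp0 S), hpsum]
      simp
    · refine mixM_full C A p ν hp0 hpsum _ fun S hS => nuRay_full C a _ ha.le ha1 _ ?_ ?_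
      · refine ⟨fun c => by simp, by simp⟩
      · intro u hu
        refine ⟨fun c => mul_nonneg hu (hk0 S hS c), ?_⟩
        rw [← hcard S hS, ← Set.ncard_coe_finset S]
        refine Set.ncard_le_ncard ?_ (Finset.finite_toSet S)
        intro c hc
        by_contra hcS
        have hcS' : c ∉ S := hcS
        simp [k, hcS'] at hc
  have hcdf : ∀ c t, 0 ≤ t → (mixM C A p ν).real {y | y c ≤ t} ≤
      1 - a * ∑ S ∈ Finset.univ.filter (fun S : Finset (Fin C) => S.card = K ∧ c ∈ S), p S
      + a ^ 2 / (2 * Y) * t *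
      ∑ S ∈ Finset.univ.filter (fun S : Finset (Fin C) => S.card = K ∧ c ∈ S), p S / β S c := by
    intro c t ht
    rw [mixM_real C A p ν hp0 hνp]
    have hb : ∀ S ∈ A, p S * (ν S).real {y | y c ≤ t} ≤
        p S + ((if c ∈ S then - a * p S else 0) +
          (if c ∈ S then a ^ 2 / (2 * Y) * t * (p S / β S c) else 0)) := by
      intro S hS
      have := hνp S hS
      by_cases hc : c ∈ S
      · have hβ := hβpos S (hcard S hS) c hc
        have hkc : k S c = 2 * Y * β S c / a := by simp [k, hc]
        have h := nuRay_cdf C a (k S) ha.le ha1 c (by rw [hkc]; positivity) t ht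
        rw [hkc] at h
        simp only [hc, if_true]
        calc p S * (ν S).real {y | y c ≤ t} ≤ p S * _ := mul_le_mul_of_nonneg_left h (hp0 S)
          _ = _ := by field_simp; ring
      · simp only [hc, if_false, add_zero]
        calc p S * (ν S).real {y | y c ≤ t} ≤ p S * 1 :=
              mul_le_mul_of_nonneg_left measureReal_le_one (hp0 S)
          _ = _ := mul_one _
    refine (Finset.sum_le_sum hb).trans (le_of_eq ?_)
    rw [Finset.sum_add_distrib, Finset.sum_add_distrib, ← Finset.sum_filter, ← Finset.sum_filter,
      hpsum, hA, Finset.filter_filter, ← Finset.mul_sum, ← Finset.mul_sum]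
    ring
  have : Nonempty (Strat C X) := by
    refine ⟨⟨Measure.dirac 0, inferInstance, ?_, ?_⟩⟩
    · exact Measure.dirac_apply_of_mem (by intro c; simp)
    · rw [lintegral_dirac' _ (by fun_prop)]; simp
  refine ciInf_le_of_le ⟨0, ?_⟩ ⟨mixM C A p ν, hG⟩ (ciSup_le fun F => ?_)
  · rintro _ ⟨G, rfl⟩
    exact Real.iSup_nonneg fun F => payoff_nonneg C v hpos _ _
  refine (payoff_le_s17 C v hpos F.1 (mixM C A p ν) X hX F.2 (1 - a * (∑ c, v c *
        ∑ S ∈ Finset.univ.filter (fun S : Finset (Fin C) => S.card = K ∧ c ∈ S), p S))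
        (a ^ 2 / (2 * Y) * Q) (by positivity) ?_).trans (le_of_eq (by ring))
  intro x hx
  rw [inner_eq]
  calc _ ≤ ∑ c, (v c - a * (v c * ∑ S ∈ Finset.univ.filter
          (fun S : Finset (Fin C) => S.card = K ∧ c ∈ S), p S) + a ^ 2 / (2 * Y) * Q * x c) := by
        refine Finset.sum_le_sum fun c _ => ?_
        refine (mul_le_mul_of_nonneg_left (hcdf c (x c) (hx c)) (hpos c).le).trans ?_
        have h := mul_le_mul_of_nonneg_left (hQ c)
          (mul_nonneg (by positivity : 0 ≤ a ^ 2 / (2 * Y)) (hx c))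
        linarith
    _ = _ := by
        rw [Finset.sum_add_distrib, Finset.sum_sub_distrib, ← Finset.mul_sum, ← Finset.mul_sum, hsum]

/-- in the generalized restricted game `RL^K(X,Y;v)`, for any probability
distribution `p` over the size-`K` subsets and any positive conditional weights `β`, the
min-max value of player X is at most the piecewise bound built from
`T₁(p) = Σ_c v_c Σ_{S ∋ c} p_S` and `T₂(p,β) = (X/(2Y))·max_c v_c Σ_{S ∋ c} p_S/β_{S,c}`. -/
theorem RLK_minmax_upper_bound (C : ℕ) (hC : 0 < C) (v : Fin C → ℝ)
    (hpos : ∀ c, 0 < v c) (hsum : ∑ c, v c = 1)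
    (X Y : ℝ) (hX : 0 < X) (hY : 0 < Y) (K : ℕ) (hK1 : 1 ≤ K) (hK2 : K ≤ C)
    (p : Finset (Fin C) → ℝ)
    (hp0 : ∀ S, 0 ≤ p S) (hpK : ∀ S, S.card ≠ K → p S = 0)
    (hpsum : ∑ S ∈ Finset.univ.filter (fun S : Finset (Fin C) => S.card = K), p S = 1)
    (β : Finset (Fin C) → Fin C → ℝ)
    (hβpos : ∀ S : Finset (Fin C), S.card = K → ∀ c ∈ S, 0 < β S c)
    (hβsum : ∀ S : Finset (Fin C), S.card = K → ∑ c ∈ S, β S c = 1) :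
    (⨅ G : StratK C K Y, ⨆ F : Strat C X, payoff C v F.1 G.1) ≤
      (let T₁ : ℝ := ∑ c, v c *
        ∑ S ∈ Finset.univ.filter (fun S : Finset (Fin C) => S.card = K ∧ c ∈ S), p S;
      let T₂ : ℝ := X / (2 * Y) * ⨆ c : Fin C, v c *
        ∑ S ∈ Finset.univ.filter (fun S : Finset (Fin C) => S.card = K ∧ c ∈ S), p S / β S c;
      if T₁ ≤ 2 * T₂ then 1 - T₁ ^ 2 / (4 * T₂) else 1 - T₁ + T₂) := by
  have hT1 : 0 < ∑ c, v c *
      ∑ S ∈ Finset.univ.filter (fun S : Finset (Fin C) => S.card = K ∧ c ∈ S), p S := by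
    by_contra hcon
    have hnn : ∀ c, 0 ≤ v c *
      ∑ S ∈ Finset.univ.filter (fun S : Finset (Fin C) => S.card = K ∧ c ∈ S), p S :=
      fun c => mul_nonneg (hpos c).le (Finset.sum_nonneg fun S _ => hp0 S)
    have h0 := (Finset.sum_eq_zero_iff_of_nonneg (fun c _ => hnn c)).1
      (le_antisymm (not_lt.1 hcon) (Finset.sum_nonneg fun c _ => hnn c))
    have hz : ∑ S ∈ Finset.univ.filter (fun S : Finset (Fin C) => S.card = K), p S = 0 := by
      refine Finset.sum_eq_zero fun S hS => ?_
      have hSK := (Finset.mem_filter.1 hS).2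
      obtain ⟨c, hc⟩ := Finset.card_pos.1 (by omega : 0 < S.card)
      have h1 := (mul_eq_zero.1 (h0 c (Finset.mem_univ c))).resolve_left (hpos c).ne'
      exact (Finset.sum_eq_zero_iff_of_nonneg (fun S _ => hp0 S)).1 h1 S (by simp [hSK, hc])
    linarith
  have hQ : ∀ c, v c *
        ∑ S ∈ Finset.univ.filter (fun S : Finset (Fin C) => S.card = K ∧ c ∈ S), p S / β S c ≤
        ⨆ c : Fin C, v c *
        ∑ S ∈ Finset.univ.filter (fun S : Finset (Fin C) => S.card = K ∧ c ∈ S), p S / β S c :=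
    fun c => le_ciSup (f := fun c : Fin C => v c *
        ∑ S ∈ Finset.univ.filter (fun S : Finset (Fin C) => S.card = K ∧ c ∈ S), p S / β S c)
      (Set.finite_range _).bddAbove c
  have hQ0 : 0 ≤ ⨆ c : Fin C, v c *
        ∑ S ∈ Finset.univ.filter (fun S : Finset (Fin C) => S.card = K ∧ c ∈ S), p S / β S c := by
    refine Real.iSup_nonneg fun c => mul_nonneg (hpos c).le (Finset.sum_nonneg fun S hS => ?_)
    have hS2 := (Finset.mem_filter.1 hS).2
    exact div_nonneg (hp0 S) (hβpos S hS2.1 c hS2.2).le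
  have key := fun a ha ha1 => bound_a C v hpos hsum X Y hX hY K p hp0 hpsum β hβpos hβsum a _
    ha ha1 hQ0 hQ
  extract_lets T₁ T₂
  change 0 < T₁ at hT1
  split_ifs with h
  · have hT2 : 0 < T₂ := by linarith
    refine (key (T₁ / (2 * T₂)) (by positivity) (by rw [div_le_one (by positivity)]; exact h)).trans
      (le_of_eq ?_)
    change 1 - T₁ / (2 * T₂) * T₁ + (T₁ / (2 * T₂)) ^ 2 * T₂ = _
    field_simp
    ring
  · refine (key 1 one_pos le_rfl).trans (le_of_eq ?_)
    change 1 - 1 * T₁ + 1 ^ 2 * T₂ = _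
    ring
end
end
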